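/- Let Φ be a crystallographic root system in a finite-dimensional real inner product space V with base Δ and Weyl group W, and let S, T ⊆ Δ. For every c > 0 there exists c' > 0 with the following property: for every w ∈ W with w ≠ 1 such that wα is a positive root for every α ∈ S and span(T) ⊆ w(span(S)), and for every λ ∈ V orthogonal to every element of S and satisfying ⟨λ, β^∨⟩ > c' for all β ∈ Δ ∖ S, there exists β ∈ Δ ∖ T such that ⟨wλ, β^∨⟩ < −c. -/

import Mathlib

open scoped RealInnerProductSpace

/-- The Weyl group of `Φ`: the subgroup of the orthogonal group (realized as linear
isometry equivalences) generated by the reflections in the roots. -/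
noncomputable def weylGroup (V : Type*) [NormedAddCommGroup V] [InnerProductSpace ℝ V]
    (Φ : Set V) : Subgroup (V ≃ₗᵢ[ℝ] V) :=
  Subgroup.closure {g | ∃ α ∈ Φ, ∀ x : V, g x = x - (2 * ⟪x, α⟫ / ⟪α, α⟫) • α}

/-- A positive root: a root all of whose coefficients with respect to the base `Δ`
are nonnegative integers. -/
def isPositiveRoot {V : Type*} [NormedAddCommGroup V] [InnerProductSpace ℝ V]
    (Φ : Set V) (Δ : Finset V) (x : V) : Prop :=
  x ∈ Φ ∧ ∃ c : V → ℤ, x = ∑ v ∈ Δ, (c v : ℝ) • v ∧ ∀ v ∈ Δ, 0 ≤ c v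

/-! By the exchange condition, a nontrivial `w ∈ W` makes some simple root `α` negative, and `α ∉ S`
because `w` keeps `S` positive. Suppose that `⟪wλ, β^∨⟫ ≥ -c` for all `β ∈ Δ ∖ T`; on `T` these
pairings vanish, since `T` lies in `w (span S)` and `λ ⊥ S`. Let `f` be the linear functional with
`f β = c ⟪β, β⟫ / 2` on `Δ`. Then `⟪wλ, ·⟫ + f` is nonnegative on the cone spanned by `Δ`, which
contains `-wα`, so `⟪λ, α⟫ = ⟪wλ, wα⟫ ≤ -f (wα)`. As `wα` is one of finitely many roots, this bounds
`⟪λ, α^∨⟫` independently of `w` and `λ`, and any `c'` beyond the bound works. -/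

open PointedCone Set Submodule

theorem exists_linearMap_eqOn_of_linearIndepOn {K E F : Type*} [DivisionRing K]
    [AddCommGroup E] [Module K E] [AddCommGroup F] [Module K F] {s : Set E}
    (hs : LinearIndepOn K id s) (g : E → F) : ∃ f : E →ₗ[K] F, EqOn f g s := by
  let b := Module.Basis.extend hs
  refine ⟨b.constr ℕ fun x => g x, fun x hx => ?_⟩
  simpa [b] using b.constr_basis ℕ (fun x => g x) ⟨x, hs.subset_extend (subset_univ s) hx⟩

section Cone

variable {K E : Type*} [Field K] [LinearOrder K] [IsStrictOrderedRing K]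
  [AddCommGroup E] [Module K E] {s : Set E} {f : E →ₗ[K] K} {x y a : E}

theorem nonneg_of_mem_hull (hf : ∀ a ∈ s, 0 ≤ f a) (hx : x ∈ hull K s) : 0 ≤ f x :=
  have : hull K s ≤ (positive K K).comap f := span_le.2 hf
  this hx

theorem sum_intCast_smul_mem_hull {t : Finset E} {k : E → ℤ} (hk : ∀ v ∈ t, 0 ≤ k v) :
    ∑ v ∈ t, (k v : K) • v ∈ hull K (t : Set E) :=
  sum_mem fun v hv => (hull K (t : Set E)).smul_mem (Int.cast_nonneg (hk v hv)) (subset_hull hv)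

theorem eq_zero_or_pos_of_mem_hull (hf : ∀ a ∈ s, 0 < f a) (hx : x ∈ hull K s) :
    x = 0 ∨ 0 < f x := by
  induction hx using span_induction with
  | mem x hx => exact .inr (hf x hx)
  | zero => exact .inl rfl
  | add x y _ _ hx hy =>
    rcases hx with rfl | hx <;> rcases hy with rfl | hy <;> simp [*, add_pos]
  | smul r x _ hx =>
    rcases hx with rfl | hx
    · simp
    · rcases eq_or_ne r 0 with rfl | hr
      · simp
      · have hr_pos : (0 : K) < r := r.2.lt_of_ne' fun h => hr (Subtype.ext h)
        have hfx : f (r • x) = r * f x := map_smul f (r : K) x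
        exact .inr (hfx ▸ mul_pos hr_pos hx)

theorem eq_zero_of_mem_hull_of_neg_mem_hull (hs : LinearIndepOn K id s)
    (hx : x ∈ hull K s) (hx' : -x ∈ hull K s) : x = 0 := by
  obtain ⟨f, hf⟩ := exists_linearMap_eqOn_of_linearIndepOn hs (fun _ => (1 : K))
  have hf_pos : ∀ a ∈ s, 0 < f a := fun a ha => by simp [hf ha]
  refine (eq_zero_or_pos_of_mem_hull hf_pos hx).resolve_right fun h => ?_
  have := nonneg_of_mem_hull (fun a ha => (hf_pos a ha).le) hx'
  rw [map_neg] at this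
  linarith

theorem mem_span_singleton_of_add_mem_span_singleton (hs : LinearIndepOn K id s) (ha : a ∈ s)
    (hx : x ∈ hull K s) (hy : y ∈ hull K s) (hxy : x + y ∈ K ∙ a) : x ∈ K ∙ a := by
  classical
  obtain ⟨f, hf⟩ := exists_linearMap_eqOn_of_linearIndepOn hs
    (fun b => if b = a then (0 : K) else 1)
  have hfa : f a = 0 := by simp [hf ha]
  have hf_pos : ∀ b ∈ s \ {a}, 0 < f b := fun b hb => by
    simp [hf hb.1, show b ≠ a from hb.2]
  rw [hull, ← insert_sdiff_self_of_mem ha, mem_span_insert] at hx hy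
  obtain ⟨r, x', hx', rfl⟩ := hx
  obtain ⟨t, y', hy', rfl⟩ := hy
  obtain ⟨k, hk⟩ := mem_span_singleton.1 hxy
  have hsum : f x' + f y' = 0 := by
    have := congrArg f hk
    simpa [hfa, Nonneg.mk_smul] using this.symm
  have hx'0 : x' = 0 := (eq_zero_or_pos_of_mem_hull hf_pos hx').resolve_right fun h => by
    linarith [nonneg_of_mem_hull (fun b hb => (hf_pos b hb).le) hy']
  rw [hx'0, add_zero]
  exact smul_mem _ (r : K) (mem_span_singleton_self a)

end Cone

section Reflection

variable {V : Type*} [NormedAddCommGroup V] [InnerProductSpace ℝ V]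

/-- The reflection `s_α` of a root system, negating `α` and fixing `α^⊥`. -/
noncomputable abbrev rootReflection (α : V) : V ≃ₗᵢ[ℝ] V := (ℝ ∙ α)ᗮ.reflection

theorem rootReflection_apply (α x : V) :
    rootReflection α x = x - (2 * ⟪x, α⟫ / ⟪α, α⟫) • α := by
  rw [reflection_orthogonal_apply, reflection_singleton_apply, real_inner_self_eq_norm_sq,
    real_inner_comm, RCLike.ofReal_real_eq_id, id_eq, ← Nat.cast_smul_eq_nsmul ℝ, smul_smul,
    neg_sub, mul_div_assoc, Nat.cast_ofNat]

theorem rootReflection_eq_of_mem_span_singleton {α β : V} (hβ : β ≠ 0) (h : β ∈ ℝ ∙ α) :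
    rootReflection β = rootReflection α := by
  obtain ⟨r, rfl⟩ := mem_span_singleton.1 h
  have hr : r ≠ 0 := left_ne_zero_of_smul hβ
  simp only [rootReflection, span_singleton_smul_eq hr.isUnit]

theorem mul_rootReflection (g : V ≃ₗᵢ[ℝ] V) (α : V) :
    g * rootReflection α = rootReflection (g α) * g := by
  ext x
  simp [rootReflection_apply]

theorem weylGroup_eq_closure_rootReflection (Φ : Set V) :
    weylGroup V Φ = Subgroup.closure (rootReflection '' Φ) := by
  simp only [weylGroup, image, ← rootReflection_apply, ← LinearIsometryEquiv.ext_iff, eq_comm]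

end Reflection

/-- `Φ` is a finite root system, not necessarily reduced or crystallographic, and `Δ` is a simple
system in it: a linearly independent set of roots such that every root or its negative lies in the
cone spanned by `Δ`. Positive roots are encoded as the roots in `PointedCone.hull ℝ Δ`. -/
structure IsSimpleSystem {V : Type*} [NormedAddCommGroup V] [InnerProductSpace ℝ V]
    (Φ Δ : Set V) : Prop where
  finite : Φ.Finite
  zero_notMem : (0 : V) ∉ Φ
  mapsTo_rootReflection : ∀ α ∈ Φ, MapsTo (rootReflection α) Φ Φ
  subset : Δ ⊆ Φ
  linearIndepOn : LinearIndepOn ℝ id Δ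
  mem_hull_or_neg_mem_hull : ∀ γ ∈ Φ, γ ∈ hull ℝ Δ ∨ -γ ∈ hull ℝ Δ

namespace IsSimpleSystem

variable {V : Type*} [NormedAddCommGroup V] [InnerProductSpace ℝ V] {Φ Δ : Set V} {α β γ : V}
  {l : List (V ≃ₗᵢ[ℝ] V)} {w : V ≃ₗᵢ[ℝ] V} {c : ℝ} {x : V}

theorem ne_zero (h : IsSimpleSystem Φ Δ) (hγ : γ ∈ Φ) : γ ≠ 0 :=
  ne_of_mem_of_not_mem hγ h.zero_notMem

theorem neg_mem (h : IsSimpleSystem Φ Δ) (hγ : γ ∈ Φ) : -γ ∈ Φ := by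
  simpa only [rootReflection, reflection_orthogonalComplement_singleton_eq_neg]
    using h.mapsTo_rootReflection γ hγ hγ

theorem neg_mem_hull_iff (h : IsSimpleSystem Φ Δ) (hγ : γ ∈ Φ) :
    -γ ∈ hull ℝ Δ ↔ γ ∉ hull ℝ Δ :=
  ⟨fun hneg hpos => h.ne_zero hγ (eq_zero_of_mem_hull_of_neg_mem_hull h.linearIndepOn hpos hneg),
    (h.mem_hull_or_neg_mem_hull γ hγ).resolve_left⟩

theorem rootReflection_eq_of_notMem_hull (h : IsSimpleSystem Φ Δ) (hα : α ∈ Δ) (hγ : γ ∈ Φ)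
    (hpos : γ ∈ hull ℝ Δ) (hneg : rootReflection α γ ∉ hull ℝ Δ) :
    rootReflection γ = rootReflection α := by
  have hneg' : -rootReflection α γ ∈ hull ℝ Δ :=
    (h.neg_mem_hull_iff (h.mapsTo_rootReflection α (h.subset hα) hγ)).2 hneg
  refine rootReflection_eq_of_mem_span_singleton (h.ne_zero hγ)
    (mem_span_singleton_of_add_mem_span_singleton h.linearIndepOn hα hpos hneg' ?_)
  rw [rootReflection_apply, neg_sub, add_sub_cancel]
  exact smul_mem _ _ (mem_span_singleton_self α)

theorem exists_inner_pos (h : IsSimpleSystem Φ Δ) (hγ : γ ∈ Φ) (hpos : γ ∈ hull ℝ Δ) :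
    ∃ α ∈ Δ, 0 < ⟪γ, α⟫ := by
  by_contra! hle
  have : 0 ≤ (-innerₛₗ ℝ γ) γ := nonneg_of_mem_hull (fun α hα => by simpa using hle α hα) hpos
  exact this.not_gt (neg_neg_of_pos (real_inner_self_pos.2 (h.ne_zero hγ)))

theorem rootReflection_mem_closure_of_mem_hull (h : IsSimpleSystem Φ Δ) (hγ : γ ∈ Φ)
    (hpos : γ ∈ hull ℝ Δ) : rootReflection γ ∈ Subgroup.closure (rootReflection '' Δ) := by
  obtain ⟨height, h_height⟩ :=
    exists_linearMap_eqOn_of_linearIndepOn h.linearIndepOn (fun _ => (1 : ℝ))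
  have h_wf : Φ.WellFoundedOn (height ⁻¹'o (· < ·)) := h.finite.wellFoundedOn
  refine h_wf.induction (P := fun γ => γ ∈ hull ℝ Δ →
    rootReflection γ ∈ Subgroup.closure (rootReflection '' Δ)) hγ (fun γ hγ ih hpos => ?_) hpos
  obtain ⟨α, hα, hγα⟩ := h.exists_inner_pos hγ hpos
  have hα_mem : rootReflection α ∈ Subgroup.closure (rootReflection '' Δ) :=
    Subgroup.subset_closure (mem_image_of_mem _ hα)
  by_cases hpos' : rootReflection α γ ∈ hull ℝ Δ
  · have h_lt : height (rootReflection α γ) < height γ := by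
      have : 0 < ⟪α, α⟫ := real_inner_self_pos.2 (h.ne_zero (h.subset hα))
      rw [rootReflection_apply, map_sub, map_smul, h_height hα, smul_eq_mul, mul_one,
        sub_lt_self_iff]
      positivity
    have h_conj : rootReflection γ =
        rootReflection α * rootReflection (rootReflection α γ) * rootReflection α := by
      rw [mul_assoc, ← mul_rootReflection, ← mul_assoc, reflection_mul_reflection, one_mul]
    rw [h_conj]
    exact mul_mem (mul_mem hα_mem
      (ih _ (h.mapsTo_rootReflection α (h.subset hα) hγ) h_lt hpos')) hα_mem
  · rwa [h.rootReflection_eq_of_notMem_hull hα hγ hpos hpos']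

theorem weylGroup_le_closure (h : IsSimpleSystem Φ Δ) :
    weylGroup V Φ ≤ Subgroup.closure (rootReflection '' Δ) := by
  rw [weylGroup_eq_closure_rootReflection, Subgroup.closure_le, image_subset_iff]
  intro γ hγ
  rcases h.mem_hull_or_neg_mem_hull γ hγ with hpos | hneg
  · exact h.rootReflection_mem_closure_of_mem_hull hγ hpos
  · have h_neg_eq : rootReflection (-γ) = rootReflection γ :=
      rootReflection_eq_of_mem_span_singleton (h.ne_zero (h.neg_mem hγ))
        ((ℝ ∙ γ).neg_mem (mem_span_singleton_self γ))
    rw [mem_preimage, ← h_neg_eq]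
    exact h.rootReflection_mem_closure_of_mem_hull (h.neg_mem hγ) hneg

theorem exists_list_prod_eq (h : IsSimpleSystem Φ Δ) (hw : w ∈ weylGroup V Φ) :
    ∃ l : List (V ≃ₗᵢ[ℝ] V), (∀ g ∈ l, g ∈ rootReflection '' Δ) ∧ l.prod = w := by
  have inv_subset : (rootReflection '' Δ)⁻¹ ⊆ rootReflection '' Δ := by
    rintro g ⟨α, hα, hg⟩
    exact ⟨α, hα, by rw [← inv_inv g, ← hg, reflection_inv]⟩
  have hw' := h.weylGroup_le_closure hw
  rw [← Subgroup.mem_toSubmonoid, Subgroup.closure_toSubmonoid,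
    union_eq_self_of_subset_right inv_subset] at hw'
  exact Submonoid.exists_list_of_mem_closure hw'

theorem mapsTo_list_prod (h : IsSimpleSystem Φ Δ) (hl : ∀ g ∈ l, g ∈ rootReflection '' Δ) :
    MapsTo l.prod Φ Φ := by
  induction l with
  | nil => exact mapsTo_id Φ
  | cons g l ih =>
    obtain ⟨⟨α, hα, rfl⟩, hl_tail⟩ := List.forall_mem_cons.1 hl
    rw [List.prod_cons]
    exact (h.mapsTo_rootReflection α (h.subset hα)).comp (ih hl_tail)

theorem strong_exchange (h : IsSimpleSystem Φ Δ)
    (hl : ∀ g ∈ l, g ∈ rootReflection '' Δ) (hβ : β ∈ Φ) (hpos : β ∈ hull ℝ Δ)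
    (hneg : l.prod β ∉ hull ℝ Δ) :
    ∃ i < l.length, l.prod * rootReflection β = (l.eraseIdx i).prod := by
  induction l with
  | nil => exact absurd hpos hneg
  | cons g l ih =>
    obtain ⟨⟨α, hα, rfl⟩, hl_tail⟩ := List.forall_mem_cons.1 hl
    rw [List.prod_cons] at hneg ⊢
    by_cases hlβ : l.prod β ∈ hull ℝ Δ
    · refine ⟨0, by simp, ?_⟩
      rw [mul_assoc, mul_rootReflection,
        h.rootReflection_eq_of_notMem_hull hα (h.mapsTo_list_prod hl_tail hβ) hlβ hneg,
        ← mul_assoc, reflection_mul_reflection, one_mul, List.eraseIdx_cons_zero]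
    · obtain ⟨i, hi, h_erase⟩ := ih hl_tail hlβ
      exact ⟨i + 1, by simpa using hi, by
        rw [mul_assoc, h_erase, List.eraseIdx_cons_succ, List.prod_cons]⟩

theorem list_prod_eq_one (h : IsSimpleSystem Φ Δ) (hl : ∀ g ∈ l, g ∈ rootReflection '' Δ)
    (hpos : ∀ α ∈ Δ, l.prod α ∈ hull ℝ Δ) : l.prod = 1 := by
  induction hn : l.length using Nat.strong_induction_on generalizing l with
  | _ n ih =>
  rcases List.eq_nil_or_concat' l with rfl | ⟨u, g, rfl⟩
  · rfl
  obtain ⟨hu, α, hα, rfl⟩ : (∀ g ∈ u, g ∈ rootReflection '' Δ) ∧ g ∈ rootReflection '' Δ := by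
    simpa [or_imp, forall_and] using hl
  rw [List.prod_append, List.prod_singleton] at hpos ⊢
  have hneg : u.prod α ∉ hull ℝ Δ := by
    rw [← h.neg_mem_hull_iff (h.mapsTo_list_prod hu (h.subset hα)), ← map_neg,
      ← reflection_orthogonalComplement_singleton_eq_neg (𝕜 := ℝ)]
    exact hpos α hα
  obtain ⟨i, hi, h_erase⟩ := h.strong_exchange hu (h.subset hα) (subset_hull hα) hneg
  rw [h_erase] at hpos ⊢
  refine ih _ ?_ (fun g hg => hu g (List.mem_of_mem_eraseIdx hg)) hpos rfl
  rw [← hn, List.length_append, List.length_eraseIdx_of_lt hi]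
  lia

theorem exists_notMem_hull_of_ne_one (h : IsSimpleSystem Φ Δ) (hw : w ∈ weylGroup V Φ)
    (hw1 : w ≠ 1) : ∃ α ∈ Δ, w α ∈ Φ ∧ w α ∉ hull ℝ Δ := by
  obtain ⟨l, hl, rfl⟩ := h.exists_list_prod_eq hw
  contrapose! hw1
  exact h.list_prod_eq_one hl fun α hα => hw1 α hα (h.mapsTo_list_prod hl (h.subset hα))

theorem inner_le_of_neg_mem_hull (h : IsSimpleSystem Φ Δ) {f : V →ₗ[ℝ] ℝ}
    (hf : EqOn f (fun β => c * ⟪β, β⟫ / 2) Δ) (hx : ∀ β ∈ Δ, -c ≤ 2 * ⟪x, β⟫ / ⟪β, β⟫)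
    (hγ : -γ ∈ hull ℝ Δ) : ⟪x, γ⟫ ≤ -f γ := by
  have h_nonneg : 0 ≤ (innerₛₗ ℝ x + f) (-γ) := by
    refine nonneg_of_mem_hull (fun β hβ => ?_) hγ
    have hβ_pos : 0 < ⟪β, β⟫ := real_inner_self_pos.2 (h.ne_zero (h.subset hβ))
    have := (le_div_iff₀ hβ_pos).1 (hx β hβ)
    rw [LinearMap.add_apply, innerₛₗ_apply_apply, hf hβ]
    linarith
  rw [map_neg, LinearMap.add_apply, innerₛₗ_apply_apply] at h_nonneg
  linarith

theorem exists_bound_inner_div_of_notMem_hull (h : IsSimpleSystem Φ Δ) (c : ℝ) :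
    ∃ K, ∀ α ∈ Φ, ∀ γ ∈ Φ, γ ∉ hull ℝ Δ →
      ∀ x : V, (∀ β ∈ Δ, -c ≤ 2 * ⟪x, β⟫ / ⟪β, β⟫) → 2 * ⟪x, γ⟫ / ⟪α, α⟫ ≤ K := by
  obtain ⟨f, hf⟩ :=
    exists_linearMap_eqOn_of_linearIndepOn h.linearIndepOn (fun β => c * ⟪β, β⟫ / 2)
  obtain ⟨K, hK⟩ := (h.finite.image2 (fun α γ => 2 * -f γ / ⟪α, α⟫) h.finite).bddAbove
  refine ⟨K, fun α hα γ hγ hneg x hx => le_trans ?_ (hK (mem_image2_of_mem hα hγ))⟩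
  have := h.inner_le_of_neg_mem_hull hf hx ((h.neg_mem_hull_iff hγ).2 hneg)
  gcongr
  exact real_inner_self_nonneg

end IsSimpleSystem

theorem isSimpleSystem_of_int_coeff {V : Type*} [NormedAddCommGroup V] [InnerProductSpace ℝ V]
    {Φ : Set V} (hfin : Φ.Finite) (h0 : (0 : V) ∉ Φ)
    (hrefl : ∀ α ∈ Φ, ∀ β ∈ Φ, β - (2 * ⟪β, α⟫ / ⟪α, α⟫) • α ∈ Φ)
    {Δ : Finset V} (hΔΦ : (Δ : Set V) ⊆ Φ) (hli : LinearIndepOn ℝ id (Δ : Set V))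
    (hbase : ∀ γ ∈ Φ, ∃ k : V → ℤ,
      γ = ∑ v ∈ Δ, (k v : ℝ) • v ∧ ((∀ v ∈ Δ, 0 ≤ k v) ∨ (∀ v ∈ Δ, k v ≤ 0))) :
    IsSimpleSystem Φ (Δ : Set V) where
  finite := hfin
  zero_notMem := h0
  mapsTo_rootReflection α hα β hβ := rootReflection_apply α β ▸ hrefl α hα β hβ
  subset := hΔΦ
  linearIndepOn := hli
  mem_hull_or_neg_mem_hull γ hγ := by
    obtain ⟨k, rfl, hk | hk⟩ := hbase γ hγ
    · exact .inl (sum_intCast_smul_mem_hull hk)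
    · refine .inr ?_
      have h_neg : -∑ v ∈ Δ, (k v : ℝ) • v = ∑ v ∈ Δ, ((-k v : ℤ) : ℝ) • v := by simp
      rw [h_neg]
      exact sum_intCast_smul_mem_hull fun v hv => neg_nonneg.2 (hk v hv)

theorem isPositiveRoot.mem_hull {V : Type*} [NormedAddCommGroup V] [InnerProductSpace ℝ V]
    {Φ : Set V} {Δ : Finset V} {x : V} (hx : isPositiveRoot Φ Δ x) : x ∈ hull ℝ (Δ : Set V) := by
  obtain ⟨-, k, rfl, hk⟩ := hx
  exact sum_intCast_smul_mem_hull hk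

theorem stmt_8_general {V : Type*} [NormedAddCommGroup V] [InnerProductSpace ℝ V] {Φ Δ : Set V}
    (h : IsSimpleSystem Φ Δ) (S T : Set V) {c : ℝ} (hc : 0 ≤ c) :
    ∃ c' : ℝ, 0 < c' ∧
      ∀ w : V ≃ₗᵢ[ℝ] V, w ∈ weylGroup V Φ → w ≠ 1 →
        (∀ α ∈ S, w α ∈ hull ℝ Δ) →
        (span ℝ T : Set V) ⊆ w '' (span ℝ S : Set V) →
        ∀ lam : V, (∀ α ∈ S, ⟪lam, α⟫ = 0) →
          (∀ β ∈ Δ, β ∉ S → c' < 2 * ⟪lam, β⟫ / ⟪β, β⟫) →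
          ∃ β ∈ Δ, β ∉ T ∧ 2 * ⟪w lam, β⟫ / ⟪β, β⟫ < -c := by
  obtain ⟨K, hK⟩ := h.exists_bound_inner_div_of_notMem_hull c
  refine ⟨max K 1, by positivity, fun w hw hw1 hwS hTS lam hlamS hlam => ?_⟩
  obtain ⟨α, hα, hwα, hneg⟩ := h.exists_notMem_hull_of_ne_one hw hw1
  have hαS : α ∉ S := fun hαS => hneg (hwS α hαS)
  have h_orthogonal : span ℝ S ≤ (ℝ ∙ lam)ᗮ :=
    span_le.2 fun β hβ => mem_orthogonal_singleton_iff_inner_right.2 (hlamS β hβ)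
  have hT : ∀ β ∈ T, ⟪w lam, β⟫ = 0 := fun β hβ => by
    obtain ⟨x, hx, rfl⟩ := hTS (subset_span hβ)
    rw [w.inner_map_map]
    exact mem_orthogonal_singleton_iff_inner_right.1 (h_orthogonal hx)
  by_contra! h_ge
  have h_bound : ∀ β ∈ Δ, -c ≤ 2 * ⟪w lam, β⟫ / ⟪β, β⟫ := fun β hβ => by
    by_cases hβT : β ∈ T
    · simpa [hT β hβT] using hc
    · exact h_ge β hβ hβT
  have h_le := hK α (h.subset hα) (w α) hwα hneg (w lam) h_bound
  rw [w.inner_map_map] at h_le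
  exact (hlam α hα hαS).not_ge (h_le.trans (le_max_left K 1))

/-- If `⟨λ, β^∨⟩` is large for all `β ∈ Δ ∖ S` and `λ ⊥ S`, then for `w ≠ 1` as in
Lemma on "far away" Weyl translates, some `⟨wλ, β^∨⟩`, `β ∈ Δ ∖ T`, is very negative. -/
theorem stmt_8 {V : Type*} [NormedAddCommGroup V] [InnerProductSpace ℝ V]
    [FiniteDimensional ℝ V]
    -- `Φ` is a crystallographic root system
    (Φ : Set V) (hfin : Φ.Finite) (h0 : (0 : V) ∉ Φ)
    (hrefl : ∀ α ∈ Φ, ∀ β ∈ Φ, β - (2 * ⟪β, α⟫ / ⟪α, α⟫) • α ∈ Φ)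
    (hcrys : ∀ α ∈ Φ, ∀ β ∈ Φ, ∃ k : ℤ, 2 * ⟪β, α⟫ / ⟪α, α⟫ = (k : ℝ))
    -- with base `Δ`
    (Δ : Finset V) (hΔΦ : (Δ : Set V) ⊆ Φ)
    (hli : LinearIndependent ℝ (fun x : Δ => (x : V)))
    (hbase : ∀ γ ∈ Φ, ∃ c : V → ℤ,
      γ = ∑ v ∈ Δ, (c v : ℝ) • v ∧ ((∀ v ∈ Δ, 0 ≤ c v) ∨ (∀ v ∈ Δ, c v ≤ 0)))
    (S T : Finset V) (hS : S ⊆ Δ) (hT : T ⊆ Δ)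
    (c : ℝ) (hc : 0 < c) :
    ∃ c' : ℝ, 0 < c' ∧
      ∀ w : V ≃ₗᵢ[ℝ] V, w ∈ weylGroup V Φ → w ≠ 1 →
        (∀ α ∈ S, isPositiveRoot Φ Δ (w α)) →
        (Submodule.span ℝ (T : Set V) : Set V) ⊆
          w '' (Submodule.span ℝ (S : Set V) : Set V) →
        ∀ lam : V, (∀ α ∈ S, ⟪lam, α⟫ = 0) →
          (∀ β ∈ Δ, β ∉ S → c' < 2 * ⟪lam, β⟫ / ⟪β, β⟫) →
          ∃ β ∈ Δ, β ∉ T ∧ 2 * ⟪w lam, β⟫ / ⟪β, β⟫ < -c := by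
  obtain ⟨c', hc', H⟩ :=
    stmt_8_general (isSimpleSystem_of_int_coeff hfin h0 hrefl hΔΦ hli hbase) S T hc.le
  exact ⟨c', hc', fun w hw hw1 hwS => H w hw hw1 fun α hα => (hwS α hα).mem_hull⟩
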